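/- For every dimension d ≥ 1 and every δ ∈ (0,1) there exists a constant c(d,δ) > 0 such that for every finite subset C of ℝ^d with at least two elements and every real number s ≥ 2, the set of points of C that are (δ,s)-supported in C has cardinality at most c(d,δ)·|C|/s. -/

import Mathlib

/-- The isolation radius of `w` in the finite set `C`: the minimal distance
from `w` to a different point of `C`. -/
noncomputable def isolationRadius {M : Type*} [MetricSpace M] (C : Set M) (w : M) : ℝ :=
  sInf {r : ℝ | ∃ z ∈ C, z ≠ w ∧ r = dist w z}

/-- `w` is `(δ,s)`-supported in `C`: for every `p`, the set
`C ∩ (B(w, δ⁻¹ρ) \ B(p, δρ))` has at least `s` points, where `ρ` is the isolation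
radius of `w` in `C` and balls are closed. -/
def IsSupported {M : Type*} [MetricSpace M] (C : Set M) (δ s : ℝ) (w : M) : Prop :=
  ∀ p : M,
    s ≤ ((C ∩ (Metric.closedBall w (δ⁻¹ * isolationRadius C w) \
        Metric.closedBall p (δ * isolationRadius C w))).ncard : ℝ)

section BSHelpers
open Finset

lemma bs_local {β : Type*} (T : Finset β) (a : β → ℝ) (s A e : ℝ) (hs : 0 < s)
    (ha : ∀ b, 0 ≤ a b) (hA : ∑ b ∈ T, a b = A)
    (he : e = 0 ∨ (e = 1 ∧ s ≤ A ∧ ∀ b ∈ T, s ≤ A - a b)) :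
    ∑ b ∈ T, max 0 (2 * a b / s - 1) + e ≤ max 0 (2 * A / s - 1) := by
  classical
  set U := T.filter (fun b => 0 < 2 * a b / s - 1) with hU
  have h1 : ∑ b ∈ T, max 0 (2 * a b / s - 1) = ∑ b ∈ U, (2 * a b / s - 1) := by
    rw [hU, Finset.sum_filter]
    refine Finset.sum_congr rfl fun b _ => ?_
    split_ifs with h
    · exact max_eq_right h.le
    · exact max_eq_left (not_lt.1 h)
  have h2 : ∑ b ∈ U, (2 * a b / s - 1) = 2 * (∑ b ∈ U, a b) / s - U.card := by
    rw [Finset.sum_sub_distrib, Finset.mul_sum, Finset.sum_div]; simp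
  have h3 : ∑ b ∈ U, a b ≤ A := by
    rw [← hA]
    exact Finset.sum_le_sum_of_subset_of_nonneg (Finset.filter_subset _ _) fun b _ _ => ha b
  have h4 : 2 * (∑ b ∈ U, a b) / s ≤ 2 * A / s := by gcongr
  rw [h1]
  rcases Nat.lt_trichotomy U.card 1 with hc | hc | hc
  · have : U = ∅ := by rw [← Finset.card_eq_zero]; omega
    rw [this]
    rcases he with he | ⟨he, h5, -⟩
    · simp [he]
    · have : 1 ≤ A / s := by rwa [le_div_iff₀ hs, one_mul]
      refine le_max_of_le_right ?_
      rw [mul_div_assoc]; simp; linarith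
  · obtain ⟨b, hb⟩ := Finset.card_eq_one.1 hc
    have hbT : b ∈ T := by
      have : b ∈ U := by rw [hb]; simp
      exact (Finset.mem_filter.1 this).1
    refine le_max_of_le_right ?_
    rcases he with he | ⟨he, h5, h6⟩
    · rw [h2, hc, he]; push_cast; linarith
    · have h7 := h6 b hbT
      rw [hb]; simp only [Finset.sum_singleton]
      have : 1 ≤ (A - a b) / s := by rwa [le_div_iff₀ hs, one_mul]
      rw [sub_div] at this
      rw [mul_div_assoc, mul_div_assoc]; linarith
  · refine le_max_of_le_right ?_
    have : (2 : ℝ) ≤ U.card := by exact_mod_cast hc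
    rw [h2]
    rcases he with he | ⟨he, -⟩ <;> rw [he] <;> linarith

open Classical in
/-- Labels at level `n+1` whose class is supported. -/
noncomputable def bsSupp {α β : Type*} (C : Finset α) (q : ℕ → α → β) (s : ℝ) (n : ℕ) :
    Finset β :=
  (C.image (q (n + 1))).filter fun b =>
    ∀ y, s ≤ ((C.filter fun x => q (n + 1) x = b ∧ q n x ≠ y).card : ℝ)

lemma mem_bsSupp {α β : Type*} (C : Finset α) (q : ℕ → α → β) (s : ℝ) (n : ℕ) (x : α)
    (hx : x ∈ C) (h : ∀ y, s ≤
      (Set.ncard {z | z ∈ C ∧ q (n + 1) z = q (n + 1) x ∧ q n z ≠ y} : ℝ)) :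
    q (n + 1) x ∈ bsSupp C q s n := by
  classical
  unfold bsSupp
  simp only [Finset.mem_filter, Finset.mem_image]
  refine ⟨⟨x, hx, rfl⟩, fun y => (h y).trans (le_of_eq ?_)⟩
  rw [← Set.ncard_coe_finset]
  congr 2
  ext z
  simp

open Classical in
lemma bs_count {α β : Type*} (C : Finset α) (q : ℕ → α → β) (P : β → β)
    (hq : ∀ n x, q (n + 1) x = P (q n x)) (s : ℝ) (hs : 0 < s) (N : ℕ) :
    (∑ n ∈ range N, ((bsSupp C q s n).card : ℝ)) ≤ 2 * C.card / s := by
  have key : ∀ N, (∑ n ∈ range N, ((bsSupp C q s n).card : ℝ)) ≤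
      ∑ b ∈ C.image (q N), max 0 (2 * ((C.filter fun x => q N x = b).card : ℝ) / s - 1) := by
    intro N
    induction N with
    | zero => simpa using Finset.sum_nonneg fun b _ => le_max_left _ _
    | succ n ih =>
      rw [Finset.sum_range_succ]
      have hmap : ∀ b ∈ C.image (q n), P b ∈ C.image (q (n + 1)) := by
        intro b hb
        obtain ⟨x, hx, rfl⟩ := Finset.mem_image.1 hb
        rw [← hq]; exact Finset.mem_image_of_mem _ hx
      rw [← Finset.sum_fiberwise_of_maps_to hmap] at ih
      have hc : ((bsSupp C q s n).card : ℝ) =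
          ∑ b ∈ C.image (q (n + 1)), if b ∈ bsSupp C q s n then (1 : ℝ) else 0 := by
        rw [← Finset.sum_filter, Finset.filter_mem_eq_inter, Finset.inter_eq_right.2
          (by unfold bsSupp; exact Finset.filter_subset _ _)]
        simp
      rw [hc]
      refine (add_le_add_left ih _).trans ?_
      rw [← Finset.sum_add_distrib]
      refine Finset.sum_le_sum fun b hb => ?_
      have hsum : ∑ b' ∈ (C.image (q n)).filter (fun b' => P b' = b),
          ((C.filter fun x => q n x = b').card : ℝ) =
          ((C.filter fun x => q (n + 1) x = b).card : ℝ) := by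
        rw [← Nat.cast_sum]
        congr 1
        rw [Finset.card_eq_sum_card_fiberwise (f := q n)
          (t := (C.image (q n)).filter (fun b' => P b' = b))]
        · refine Finset.sum_congr rfl fun b' hb' => ?_
          congr 1
          ext x
          simp only [Finset.mem_filter] at hb' ⊢
          constructor
          · rintro ⟨h1, h2⟩
            exact ⟨⟨h1, by rw [hq, h2, hb'.2]⟩, h2⟩
          · rintro ⟨⟨h1, _⟩, h2⟩
            exact ⟨h1, h2⟩
        · intro x hx
          simp only [Finset.coe_filter, Set.mem_ofPred_eq, Finset.mem_image] at hx ⊢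
          exact ⟨⟨x, hx.1, rfl⟩, by rw [← hq, hx.2]⟩
      apply bs_local _ (fun b' => ((C.filter fun x => q n x = b').card : ℝ)) s _ _ hs
        (fun _ => Nat.cast_nonneg _) hsum
      split_ifs with hS
      · right
        have hS2 := (Finset.mem_filter.1 hS).2
        refine ⟨rfl, ?_, ?_⟩
        · refine (hS2 b).trans ?_
          exact_mod_cast Finset.card_le_card fun x hx => by
            simp only [Finset.mem_filter] at hx ⊢
            exact ⟨hx.1, hx.2.1⟩
        · intro b' hb'
          rw [le_sub_iff_add_le]
          refine (add_le_add_left (hS2 b') _).trans ?_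
          rw [← Nat.cast_add, ← Finset.card_union_of_disjoint]
          · exact_mod_cast Finset.card_le_card fun x hx => by
              simp only [Finset.mem_filter, Finset.mem_union] at hx hb' ⊢
              rcases hx with hx | hx
              · exact ⟨hx.1, hx.2.1⟩
              · exact ⟨hx.1, by rw [hq, hx.2, hb'.2]⟩
          · rw [Finset.disjoint_left]
            intro x hx hx'
            simp only [Finset.mem_filter] at hx hx'
            exact hx.2.2 hx'.2
      · left; rfl
  refine (key N).trans ?_
  have : (C.card : ℝ) = ∑ b ∈ C.image (q N), ((C.filter fun x => q N x = b).card : ℝ) := by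
    rw [← Nat.cast_sum]; congr 1
    exact Finset.card_eq_sum_card_fiberwise fun x hx => Finset.mem_image_of_mem _ hx
  rw [this, Finset.mul_sum, Finset.sum_div]
  refine Finset.sum_le_sum fun b _ => max_le (by positivity) (by linarith)

lemma bs_third (y : ℝ) (n : ℕ) : ∃ e : Bool, ∀ t : ℝ, |t| < 1 / 6 →
    ⌊y + (if e then (2 : ℝ) ^ n / 3 else 0) + t⌋ = ⌊y + (if e then (2 : ℝ) ^ n / 3 else 0)⌋ := by
  have main : ∀ z : ℝ, ∀ k : ℤ, k + 1 / 6 ≤ z → z ≤ k + 5 / 6 → ∀ t : ℝ, |t| < 1 / 6 →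
      ⌊z + t⌋ = ⌊z⌋ := by
    intro z k h1 h2 t ht
    rw [abs_lt] at ht
    rw [Int.floor_eq_iff.2 (⟨by linarith, by linarith⟩ : (k : ℝ) ≤ z ∧ z < k + 1),
      Int.floor_eq_iff]
    constructor <;> linarith
  have f1 := Int.floor_le y
  have f2 := Int.lt_floor_add_one y
  obtain ⟨j, hj⟩ : ∃ j : ℤ, (2 : ℤ) ^ n = 3 * j + 1 ∨ (2 : ℤ) ^ n = 3 * j + 2 := by
    induction n with
    | zero => exact ⟨0, by simp⟩
    | succ n ih =>
      obtain ⟨j, h | h⟩ := ih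
      · exact ⟨2 * j, by rw [pow_succ]; omega⟩
      · exact ⟨2 * j + 1, by rw [pow_succ]; omega⟩
  have hj' : (2 : ℝ) ^ n = 3 * j + 1 ∨ (2 : ℝ) ^ n = 3 * j + 2 := by exact_mod_cast hj
  by_cases a : y < ⌊y⌋ + 1 / 6
  · refine ⟨true, main _ (⌊y⌋ + j) ?_ ?_⟩ <;> push_cast <;> simp only [if_true] <;>
      rcases hj' with h | h <;> rw [h] <;> linarith
  by_cases b : ⌊y⌋ + 5 / 6 < y
  · refine ⟨true, main _ (⌊y⌋ + j + 1) ?_ ?_⟩ <;> push_cast <;> simp only [if_true] <;>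
      rcases hj' with h | h <;> rw [h] <;> linarith
  · refine ⟨false, main _ ⌊y⌋ ?_ ?_⟩ <;> simp <;> linarith

lemma bs_iso_le {M : Type*} [MetricSpace M] (C : Set M) (w z : M) (hz : z ∈ C) (h : z ≠ w) :
    isolationRadius C w ≤ dist w z :=
  csInf_le ⟨0, by rintro r ⟨x, -, -, rfl⟩; exact dist_nonneg⟩ ⟨z, hz, h, rfl⟩

lemma bs_iso_pos {M : Type*} [MetricSpace M] (C : Set M) (hC : C.Finite) (h2 : 2 ≤ C.ncard)
    (w : M) : 0 < isolationRadius C w := by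
  have hne : {r : ℝ | ∃ z ∈ C, z ≠ w ∧ r = dist w z}.Nonempty := by
    obtain ⟨z, hz, hzw⟩ := Set.exists_ne_of_one_lt_ncard (by omega : 1 < C.ncard) w
    exact ⟨_, z, hz, hzw, rfl⟩
  have hfin : {r : ℝ | ∃ z ∈ C, z ≠ w ∧ r = dist w z}.Finite := by
    refine (hC.image (fun z => dist w z)).subset ?_
    rintro r ⟨z, hz, -, rfl⟩
    exact ⟨z, hz, rfl⟩
  obtain ⟨z, hz, hzw, h⟩ := hne.csInf_mem hfin
  unfold isolationRadius
  rw [h]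
  exact dist_pos.2 hzw.symm

/-- Grid label. -/
noncomputable def bsq {d : ℕ} (m L : ℕ) (e : Fin d → Bool) (r n : ℕ)
    (x : EuclideanSpace ℝ (Fin d)) : Fin d → ℤ := fun c =>
  ⌊(x c + if e c then (2 : ℝ) ^ L / 3 else 0) / (2 : ℝ) ^ ((r : ℤ) + m * n - m - L)⌋

lemma bsq_succ {d : ℕ} (m L : ℕ) (e : Fin d → Bool) (r n : ℕ)
    (x : EuclideanSpace ℝ (Fin d)) :
    bsq m L e r (n + 1) x = fun c => bsq m L e r n x c / 2 ^ m := by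
  funext c
  unfold bsq
  have h : ((r : ℤ) + m * (n + 1 : ℕ) - m - L) = ((r : ℤ) + m * n - m - L) + (m : ℕ) := by
    push_cast; ring
  rw [h, zpow_add₀ (by norm_num), ← div_div, zpow_natCast]
  have := Int.floor_div_natCast
    ((x c + if e c then (2 : ℝ) ^ L / 3 else 0) / (2 : ℝ) ^ ((r : ℤ) + m * n - m - L)) (2 ^ m)
  push_cast at this
  exact this

lemma bsq_dist {d : ℕ} (m L : ℕ) (e : Fin d → Bool) (r n : ℕ)
    (x y : EuclideanSpace ℝ (Fin d)) (h : bsq m L e r n x = bsq m L e r n y) :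
    dist x y ≤ d * (2 : ℝ) ^ ((r : ℤ) + m * n - m - L) := by
  set σ := (2 : ℝ) ^ ((r : ℤ) + m * n - m - L) with hσ
  have hσ0 : 0 < σ := by positivity
  have hc : ∀ c, dist (x c) (y c) ^ 2 ≤ σ ^ 2 := by
    intro c
    have := Int.abs_sub_lt_one_of_floor_eq_floor (congrFun h c)
    rw [← hσ, ← sub_div, add_sub_add_right_eq_sub, abs_div, abs_of_pos hσ0, div_lt_one hσ0] at this
    rw [Real.dist_eq]
    have h2 : |x c - y c| ≤ σ := this.le
    gcongr
  rw [EuclideanSpace.dist_eq]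
  apply Real.sqrt_le_iff.2 ⟨by positivity, ?_⟩
  calc _ ≤ ∑ c : Fin d, σ ^ 2 := Finset.sum_le_sum fun c _ => hc c
    _ = d * σ ^ 2 := by simp
    _ ≤ (d * σ) ^ 2 := by
      rw [mul_pow]
      gcongr
      rw [sq]
      exact_mod_cast Nat.le_mul_self d

/-- data of one supported point -/
lemma bs_point {d : ℕ} (δ : ℝ) (hδ : 0 < δ) (m L : ℕ) (hm0 : 0 < m)
    (hm : 12 * d / δ ^ 2 ≤ (2 : ℝ) ^ m)
    (C : Finset (EuclideanSpace ℝ (Fin d))) (s : ℝ) (w : EuclideanSpace ℝ (Fin d)) (hw : w ∈ C)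
    (k : ℤ) (hkL : |k| ≤ L) (hS : IsSupported (C : Set _) δ s w)
    (h1 : 6 * (δ⁻¹ * isolationRadius (C : Set _) w) < (2 : ℝ) ^ k)
    (h2 : (2 : ℝ) ^ k ≤ 12 * (δ⁻¹ * isolationRadius (C : Set _) w)) :
    ∃ (e : Fin d → Bool) (r : Fin m) (n : ℕ), n < 2 * L + 1 ∧
      bsq m L e r (n + 1) w ∈ bsSupp C (bsq m L e r) s n ∧
      ∀ x y, bsq m L e r n x = bsq m L e r n y →
        dist x y ≤ δ * isolationRadius (C : Set _) w := by
  classical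
  rw [abs_le] at hkL
  set ρ := isolationRadius (C : Set (EuclideanSpace ℝ (Fin d))) w with hρ
  obtain ⟨i, hi⟩ := Int.eq_ofNat_of_zero_le (by linarith : 0 ≤ k + L)
  obtain ⟨j, hj⟩ := Int.eq_ofNat_of_zero_le (by linarith : 0 ≤ L - k)
  have hσ0 : (0 : ℝ) < 2 ^ k := by positivity
  have hth := fun c => bs_third (w c / 2 ^ k) j
  choose e he using hth
  have hdm : ((i % m : ℕ) : ℤ) + m * (i / m : ℕ) = k + L := by
    rw [hi]; exact_mod_cast Nat.mod_add_div i m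
  have hexp : (((i % m : ℕ) : ℤ) + m * (i / m + 1 : ℕ) - m - L) = k := by
    push_cast at hdm ⊢; linarith
  have hexp0 : (((i % m : ℕ) : ℤ) + m * (i / m : ℕ) - m - L) = k - m := by
    rw [hdm]; ring
  have hdist : ∀ x y, bsq m L e (i % m) (i / m) x = bsq m L e (i % m) (i / m) y →
        dist x y ≤ δ * ρ := by
    intro x y hxy
    refine (bsq_dist _ _ _ _ _ _ _ hxy).trans ?_
    rw [hexp0, zpow_sub₀ (by norm_num), zpow_natCast, ← mul_div_assoc,
      div_le_iff₀ (by positivity)]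
    have hR : 0 < δ⁻¹ * ρ := by linarith
    calc (d : ℝ) * 2 ^ k ≤ d * (12 * (δ⁻¹ * ρ)) := by gcongr
      _ = (δ ^ 2 * (δ⁻¹ * ρ)) * (12 * d / δ ^ 2) := by field_simp
      _ ≤ (δ ^ 2 * (δ⁻¹ * ρ)) * 2 ^ m := by gcongr
      _ = δ * ρ * 2 ^ m := by field_simp
  have hball : ∀ x, dist x w ≤ δ⁻¹ * ρ →
      bsq m L e (i % m) (i / m + 1) x = bsq m L e (i % m) (i / m + 1) w := by
    intro x hx
    funext c
    unfold bsq
    rw [hexp]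
    have hv : (if e c = true then (2 : ℝ) ^ L / 3 else 0) / 2 ^ k =
        if e c = true then (2 : ℝ) ^ j / 3 else 0 := by
      split_ifs
      · have : (2 : ℝ) ^ L = 2 ^ j * 2 ^ k := by
          rw [← zpow_natCast, ← zpow_natCast, ← zpow_add₀ (by norm_num)]
          congr 1
          linarith
        rw [this]; field_simp
      · simp
    have hcoord : |x c - w c| ≤ δ⁻¹ * ρ := by
      refine le_trans ?_ hx
      rw [dist_eq_norm]
      have := PiLp.norm_apply_le (x - w) c
      simpa using this
    have := he c ((x c - w c) / 2 ^ k) (by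
      rw [abs_div, abs_of_pos hσ0, div_lt_iff₀ hσ0]; linarith)
    rw [add_div, add_div, hv, ← this]
    congr 1
    ring
  refine ⟨e, ⟨i % m, Nat.mod_lt _ hm0⟩, i / m, ?_, ?_, hdist⟩
  · have := Nat.div_le_self i m
    omega
  · refine mem_bsSupp _ _ _ _ _ hw fun y => ?_
    have hex : ∃ p, ∀ x, bsq m L e (i % m) (i / m) x = y → x ∈ Metric.closedBall p (δ * ρ) := by
      by_cases hy : ∃ p, bsq m L e (i % m) (i / m) p = y
      · obtain ⟨p, hp⟩ := hy
        exact ⟨p, fun x hx => hdist x p (hx.trans hp.symm)⟩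
      · exact ⟨w, fun x hx => (hy ⟨x, hx⟩).elim⟩
    obtain ⟨p, hp⟩ := hex
    refine (hS p).trans ?_
    rw [Nat.cast_le]
    refine Set.ncard_le_ncard ?_ (C.finite_toSet.subset fun x hx => hx.1)
    rintro x ⟨hxC, hx1, hx2⟩
    exact ⟨hxC, hball x hx1, fun h => hx2 (hp x h)⟩

end BSHelpers

/-- Benjamini–Schramm lemma in `ℝ^d`. -/
theorem benjamini_schramm_lemma :
    ∀ d : ℕ, 1 ≤ d → ∀ δ : ℝ, 0 < δ → δ < 1 →
      ∃ c : ℝ, 0 < c ∧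
        ∀ C : Set (EuclideanSpace ℝ (Fin d)), C.Finite → 2 ≤ C.ncard →
          ∀ s : ℝ, 2 ≤ s →
            (({w ∈ C | IsSupported C δ s w}).ncard : ℝ) ≤ c * C.ncard / s := by
  classical
  intro d hd δ hδ hδ1
  obtain ⟨m, hm0, hm⟩ : ∃ m : ℕ, 0 < m ∧ 12 * d / δ ^ 2 ≤ (2 : ℝ) ^ m := by
    obtain ⟨m, hm⟩ := pow_unbounded_of_one_lt (12 * d / δ ^ 2) (one_lt_two : (1 : ℝ) < 2)
    exact ⟨m + 1, by omega, hm.le.trans (pow_le_pow_right₀ (by norm_num) (by omega))⟩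
  let I : Finset (Fin d → ℤ) := Fintype.piFinset fun _ => Finset.Ico 0 (2 ^ m)
  let T : Finset (((Fin d → Bool) × Fin m) × (Fin d → ℤ)) := Finset.univ ×ˢ I
  have hT : 0 < T.card := by
    have : Nonempty (Fin m) := ⟨⟨0, hm0⟩⟩
    refine Finset.card_pos.2 ⟨(Classical.arbitrary _, fun _ => 0), ?_⟩
    simp [T, I]
  refine ⟨T.card * 2, by positivity, ?_⟩
  intro C hC h2 s hs
  have hs0 : 0 < s := by linarith
  have hρ := fun w => bs_iso_pos C hC h2 w
  lift C to Finset (EuclideanSpace ℝ (Fin d)) using hC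
  have hset : {w ∈ (C : Set (EuclideanSpace ℝ (Fin d))) | IsSupported (C : Set (EuclideanSpace ℝ (Fin d))) δ s w} =
      ((C.filter fun w => IsSupported (C : Set (EuclideanSpace ℝ (Fin d))) δ s w : Finset _) : Set _) := by
    ext; simp
  rw [hset, Set.ncard_coe_finset, Set.ncard_coe_finset]
  set S := C.filter fun w => IsSupported (C : Set (EuclideanSpace ℝ (Fin d))) δ s w with hSdef
  have hk : ∀ w, ∃ k : ℤ, 6 * (δ⁻¹ * isolationRadius (C : Set (EuclideanSpace ℝ (Fin d))) w) < (2 : ℝ) ^ k ∧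
      (2 : ℝ) ^ k ≤ 12 * (δ⁻¹ * isolationRadius (C : Set (EuclideanSpace ℝ (Fin d))) w) := by
    intro w
    have hp : 0 < 6 * (δ⁻¹ * isolationRadius (C : Set (EuclideanSpace ℝ (Fin d))) w) := by have := hρ w; positivity
    obtain ⟨n, hn1, hn2⟩ := exists_mem_Ico_zpow hp (one_lt_two : (1 : ℝ) < 2)
    refine ⟨n + 1, hn2, ?_⟩
    rw [zpow_add₀ (by norm_num), zpow_one]; linarith
  choose k hk1 hk2 using hk
  let L := C.sup fun w => (k w).natAbs
  have hL : ∀ w ∈ C, |k w| ≤ L := by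
    intro w hw
    rw [Int.abs_eq_natAbs]
    exact_mod_cast Finset.le_sup (f := fun w => (k w).natAbs) hw
  have hpt : ∀ w, ∃ (e : Fin d → Bool) (r : Fin m) (n : ℕ), w ∈ S → (n < 2 * L + 1 ∧
      bsq m L e r (n + 1) w ∈ bsSupp C (bsq m L e r) s n ∧
      ∀ x y, bsq m L e r n x = bsq m L e r n y →
        dist x y ≤ δ * isolationRadius (C : Set (EuclideanSpace ℝ (Fin d))) w) := by
    intro w
    by_cases hw : w ∈ S
    · have hw' := Finset.mem_filter.1 hw
      obtain ⟨e, r, n, h⟩ := bs_point δ hδ m L hm0 hm C s w hw'.1 (k w) (hL w hw'.1) hw'.2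
        (hk1 w) (hk2 w)
      exact ⟨e, r, n, fun _ => h⟩
    · exact ⟨fun _ => true, ⟨0, hm0⟩, 0, fun h => (hw h).elim⟩
  choose e r n hpt using hpt
  let key : EuclideanSpace ℝ (Fin d) → ((Fin d → Bool) × Fin m) × (Fin d → ℤ) := fun w =>
    ((e w, r w), fun c => bsq m L (e w) (r w) (n w) w c % 2 ^ m)
  have hkey : ∀ w ∈ S, key w ∈ T := by
    intro w _
    simp only [T, I, key, Finset.mem_product, Finset.mem_univ, true_and, Fintype.mem_piFinset,
      Finset.mem_Ico]
    intro c
    exact ⟨Int.emod_nonneg _ (by positivity), Int.emod_lt_of_pos _ (by positivity)⟩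
  have hfib : ∀ t ∈ T, ((S.filter fun w => key w = t).card : ℝ) ≤ 2 * C.card / s := by
    rintro ⟨⟨e0, r0⟩, o⟩ _
    refine le_trans ?_ (bs_count C (bsq m L e0 r0) (fun b c => b c / 2 ^ m)
      (fun n x => bsq_succ m L e0 r0 n x) s hs0 (2 * L + 1))
    rw [← Nat.cast_sum, Nat.cast_le, ← Finset.card_sigma]
    refine Finset.card_le_card_of_injOn
      (fun w => (⟨n w, bsq m L e0 r0 (n w + 1) w⟩ : (_ : ℕ) × (Fin d → ℤ))) ?_ ?_
    · intro w hw
      have hw := Finset.mem_filter.1 hw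
      simp only [key, Prod.mk.injEq] at hw
      obtain ⟨hwS, ⟨rfl, rfl⟩, _⟩ := hw
      have := hpt w hwS
      simp only [Finset.coe_sigma, Set.mem_sigma_iff, Finset.mem_coe, Finset.mem_range]
      exact ⟨this.1, this.2.1⟩
    · intro w hw w' hw' hww
      have hw := Finset.mem_filter.1 hw
      have hw' := Finset.mem_filter.1 hw'
      simp only [key, Prod.mk.injEq] at hw hw'
      obtain ⟨hwS, ⟨he, hr⟩, ho⟩ := hw
      obtain ⟨hwS', ⟨he', hr'⟩, ho'⟩ := hw'
      simp only [Sigma.mk.injEq, heq_eq_eq] at hww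
      obtain ⟨hn, hb⟩ := hww
      rw [he, hr] at ho
      rw [he', hr', ← hn] at ho'
      rw [← hn, bsq_succ, bsq_succ] at hb
      have heq : bsq m L e0 r0 (n w) w = bsq m L e0 r0 (n w) w' := by
        funext c
        have a1 := congrFun hb c
        have a2 := congrFun (ho.trans ho'.symm) c
        rw [← Int.emod_add_mul_ediv (bsq m L e0 r0 (n w) w c) (2 ^ m), a1, a2,
          Int.emod_add_mul_ediv]
      have hd := (hpt w hwS).2.2 w w' (by rw [he, hr]; exact heq)
      by_contra hne
      have h3 := bs_iso_le (C : Set (EuclideanSpace ℝ (Fin d))) w w' (Finset.mem_filter.1 hwS').1 (Ne.symm hne)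
      have h4 := hρ w
      nlinarith
  rw [Finset.card_eq_sum_card_fiberwise hkey, Nat.cast_sum]
  refine (Finset.sum_le_sum hfib).trans (le_of_eq ?_)
  rw [Finset.sum_const, nsmul_eq_mul]
  ring
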